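/- Let G be a finite directed graph with node set V = V_0 ⊎ V_1 partitioned between Player 0 and Player 1, arc set E ⊆ V × V with real weights w, and suppose every node has at least one outgoing arc. Then the following are equivalent: (i) there exists s : V → ℝ such that for every u ∈ V_0 and every arc (u, v) ∈ E one has s(u) ≥ s(v) − w(u, v), and for every u ∈ V_1 there exists an arc (u, v) ∈ E with s(u) ≥ s(v) − w(u, v); (ii) there exists a positional strategy π : V_1 → V with (u, π(u)) ∈ E for every u ∈ V_1 such that the subgraph G_π, retaining all arcs with tail in V_0 and, for each u ∈ V_1, only the arc (u, π(u)), is conservative (every directed cycle of G_π has nonnegative total weight). (Condition (i) is the consistency of the HyTN associated to the mean payoff game G, and condition (ii) holds exactly when every node of G is a winning start position for Player 1.) -/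

import Mathlib

/-!
Condition (i) is the existence of a feasible potential for some projection `G_π`, so the
equivalence is the classical fact that a finite weighted digraph has a feasible potential exactly
when it is conservative.

From a potential `s`, let `π` pick at each Player-1 node an arc along which the inequality holds;
summing `s v - s u ≤ w u v` around a cycle of `G_π` telescopes to `0 ≤` its weight.

Conversely, in a conservative graph let `s v` be the infimum of the weights of the walks ending
at `v` (`exists_potential`). Extending walks by one arc gives the potential inequality. The infimum
is over a set bounded below (`walk_weight_bounded`): a walk with at least `|V|` arcs repeats a node,
and removing the closed part in between shortens the walk without increasing its weight.
-/

/-- The first `n` arcs of the sequence `x` form a walk along `R`. The values of `x` beyond index `n`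
are irrelevant. -/
def IsWalk {V : Type*} (R : V → V → Prop) (x : ℕ → V) (n : ℕ) : Prop :=
  ∀ i < n, R (x i) (x (i + 1))

/-- Total weight of the first `n` arcs of the sequence `x`. -/
def walkWeight {V : Type*} (w : V → V → ℝ) (x : ℕ → V) (n : ℕ) : ℝ :=
  ∑ i ∈ Finset.range n, w (x i) (x (i + 1))

/-- Every cyclic sequence along `R` has nonnegative total weight. -/
def Conservative {V : Type*} (R : V → V → Prop) (w : V → V → ℝ) : Prop :=
  ∀ (l : ℕ) (c : ZMod (l + 1) → V), (∀ k, R (c k) (c (k + 1))) →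
    0 ≤ ∑ k, w (c k) (c (k + 1))

/-- Conservativity restated for closed walks indexed by `ℕ`. -/
lemma Conservative.closed_walk {V : Type*} {R : V → V → Prop} {w : V → V → ℝ}
    (h : Conservative R w) (x : ℕ → V) (n : ℕ) (hx : IsWalk R x n) (hc : x n = x 0) :
    0 ≤ walkWeight w x n := by
  cases n with
  | zero => simp [walkWeight]
  | succ l =>
    let c : Fin (l + 1) → V := fun k => x k.val
    have hsucc : ∀ k : Fin (l + 1), c (k + 1) = x (k.val + 1) := by
      intro k
      simp only [c, Fin.val_add_one]
      split_ifs with hk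
      · rw [hk, Fin.val_last, hc]
      · rfl
    have hR : ∀ k : Fin (l + 1), R (c k) (c (k + 1)) := by
      intro k
      rw [hsucc]
      exact hx k.val k.isLt
    -- `ZMod (l + 1)` unfolds to `Fin (l + 1)`.
    have h0 : 0 ≤ ∑ k : Fin (l + 1), w (c k) (c (k + 1)) := h l c hR
    simp only [hsucc, c] at h0
    rwa [Fin.sum_univ_eq_sum_range (fun i => w (x i) (x (i + 1)))] at h0

/-- Removing the closed part of a walk between positions `i` and `i + d` leaves a walk of no
larger weight. -/
lemma Conservative.cut {V : Type*} {R : V → V → Prop} {w : V → V → ℝ}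
    (h : Conservative R w) (x : ℕ → V) (i d m : ℕ) (hx : IsWalk R x (i + d + m))
    (hc : x (i + d) = x i) :
    ∃ y, IsWalk R y (i + m) ∧ walkWeight w y (i + m) ≤ walkWeight w x (i + d + m) := by
  have hloop : 0 ≤ walkWeight w (fun k => x (i + k)) d :=
    h.closed_walk _ d (fun k hk => hx (i + k) (by omega)) hc
  let y : ℕ → V := fun k => if k < i then x k else x (k + d)
  have y1 : ∀ k ≤ i, y k = x k := by
    intro k hk
    rcases hk.lt_or_eq with hk | rfl
    · simp [y, hk]
    · simp [y, hc]
  have y2 : ∀ k, y (i + k) = x (i + d + k) := by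
    intro k
    simp only [y]
    rw [if_neg (by omega)]
    congr 1
    omega
  refine ⟨y, ?_, ?_⟩
  · intro k hk
    rcases lt_or_ge k i with hki | hki
    · rw [y1 k hki.le, y1 (k + 1) hki]
      exact hx k (by omega)
    · obtain ⟨j, rfl⟩ := Nat.exists_eq_add_of_le hki
      rw [add_assoc, y2, y2]
      exact hx (i + d + j) (by omega)
  · unfold walkWeight at hloop ⊢
    rw [Finset.sum_range_add, Finset.sum_range_add _ (i + d) m, Finset.sum_range_add _ i d]
    have e1 : ∑ k ∈ Finset.range i, w (y k) (y (k + 1)) =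
        ∑ k ∈ Finset.range i, w (x k) (x (k + 1)) := by
      refine Finset.sum_congr rfl fun k hk => ?_
      have hk := Finset.mem_range.mp hk
      rw [y1 k hk.le, y1 (k + 1) hk]
    have e2 : ∑ k ∈ Finset.range m, w (y (i + k)) (y (i + k + 1)) =
        ∑ k ∈ Finset.range m, w (x (i + d + k)) (x (i + d + k + 1)) := by
      refine Finset.sum_congr rfl fun k _ => ?_
      rw [add_assoc i k 1, y2, y2]
      rfl
    rw [e1, e2]
    simp only [← add_assoc] at hloop
    linarith

lemma walk_weight_bounded {V : Type*} [Fintype V] {R : V → V → Prop} {w : V → V → ℝ}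
    (h : Conservative R w) : ∃ B : ℝ, ∀ n x, IsWalk R x n → B ≤ walkWeight w x n := by
  set M : ℝ := ∑ u, ∑ v, |w u v| with hM
  have hM0 : 0 ≤ M := Finset.sum_nonneg fun _ _ => Finset.sum_nonneg fun _ _ => abs_nonneg _
  have hw : ∀ u v, -M ≤ w u v := by
    intro u v
    have h1 : |w u v| ≤ ∑ v, |w u v| :=
      Finset.single_le_sum (f := fun v => |w u v|) (fun _ _ => abs_nonneg _) (Finset.mem_univ v)
    have h2 : ∑ v, |w u v| ≤ M :=
      Finset.single_le_sum (f := fun u => ∑ v, |w u v|)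
        (fun _ _ => Finset.sum_nonneg fun _ _ => abs_nonneg _) (Finset.mem_univ u)
    linarith [neg_abs_le (w u v)]
  refine ⟨-(Fintype.card V * M), fun n => ?_⟩
  induction n using Nat.strong_induction_on with
  | _ n ih =>
    intro x hx
    rcases lt_or_ge n (Fintype.card V) with hn | hn
    · have h1 : ∑ _i ∈ Finset.range n, (-M) ≤ walkWeight w x n :=
        Finset.sum_le_sum fun i _ => hw _ _
      have h2 : (n : ℝ) * M ≤ Fintype.card V * M := by gcongr
      simp only [Finset.sum_const, Finset.card_range, nsmul_eq_mul] at h1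
      linarith
    · obtain ⟨a, b, hab, hxab⟩ := Fintype.exists_ne_map_eq_of_card_lt
        (fun k : Fin (n + 1) => x k) (by simpa using Nat.lt_succ_of_le hn)
      wlog hlt : a < b generalizing a b
      · exact this b a hab.symm hxab.symm (lt_of_le_of_ne (not_lt.mp hlt) hab.symm)
      obtain ⟨d, hd⟩ := Nat.exists_eq_add_of_lt (Fin.lt_def.mp hlt)
      obtain ⟨m, hm⟩ := Nat.exists_eq_add_of_le (Nat.le_of_lt_succ b.isLt)
      have hn' : n = a + (d + 1) + m := by omega
      rw [hn'] at hx ⊢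
      obtain ⟨y, hy, hle⟩ := h.cut x a (d + 1) m hx (by rw [← add_assoc, ← hd]; exact hxab.symm)
      exact (ih (a + m) (by omega) y hy).trans hle

lemma exists_potential {V : Type*} [Fintype V] {R : V → V → Prop} {w : V → V → ℝ}
    (h : Conservative R w) : ∃ s : V → ℝ, ∀ u v, R u v → s v - w u v ≤ s u := by
  obtain ⟨B, hB⟩ := walk_weight_bounded h
  let S : V → Set ℝ := fun v => {r | ∃ n x, IsWalk R x n ∧ x n = v ∧ walkWeight w x n = r}
  have hbdd : ∀ v, BddBelow (S v) := by
    refine fun v => ⟨B, ?_⟩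
    rintro _ ⟨n, x, hx, -, rfl⟩
    exact hB n x hx
  -- The walk without arcs makes `S v` nonempty.
  have hne : ∀ v, (S v).Nonempty := fun v =>
    ⟨_, 0, fun _ => v, fun i hi => absurd hi (Nat.not_lt_zero i), rfl, rfl⟩
  refine ⟨fun v => sInf (S v), fun u v huv => le_csInf (hne u) ?_⟩
  rintro _ ⟨n, x, hx, hxu, rfl⟩
  rw [sub_le_iff_le_add]
  let y : ℕ → V := fun k => if k ≤ n then x k else v
  have y1 : ∀ k ≤ n, y k = x k := fun k hk => if_pos hk
  have y2 : y (n + 1) = v := if_neg (by omega)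
  refine csInf_le (hbdd v) ⟨n + 1, y, ?_, y2, ?_⟩
  · intro i hi
    rcases (Nat.le_of_lt_succ hi).lt_or_eq with hi | rfl
    · rw [y1 i hi.le, y1 (i + 1) hi]
      exact hx i hi
    · rw [y1 i le_rfl, y2, hxu]
      exact huv
  · unfold walkWeight
    rw [Finset.sum_range_succ, y1 n le_rfl, y2, hxu]
    congr 1
    refine Finset.sum_congr rfl fun k hk => ?_
    have hk := Finset.mem_range.mp hk
    rw [y1 k hk.le, y1 (k + 1) hk]

/-- Let `G` be a finite directed weighted graph whose nodes are partitioned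
between Player 0 (`player u = false`) and Player 1 (`player u = true`), with
no loops and every node having at least one outgoing arc.  The following are
equivalent:
(i) there is `s : V → ℝ` with `s u ≥ s v - w u v` along every arc out of a
Player-0 node, and along at least one arc out of each Player-1 node (the
consistency of the HyTN associated to the mean payoff game `G`);
(ii) there is a positional strategy `π` for Player 1 such that the projection
`G_π` — keeping all arcs out of Player-0 nodes and, for each Player-1 node
`u`, only the arc `(u, π u)` — is conservative: every directed cycle of
`G_π` (encoded as a cyclic sequence `c : ZMod (ℓ+1) → V` whose consecutive
pairs are arcs of `G_π`) has nonnegative total weight.  (Condition (ii) holds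
exactly when every node of `G` is a winning start position for Player 1.) -/
theorem stmt_11 {V : Type*} [Fintype V] (player : V → Bool)
    (E : Set (V × V)) (w : V → V → ℝ)
    (hloop : ∀ a ∈ E, a.1 ≠ a.2)
    (hout : ∀ u : V, ∃ v, (u, v) ∈ E) :
    (∃ s : V → ℝ,
      (∀ u, player u = false → ∀ v, (u, v) ∈ E → s v - w u v ≤ s u) ∧
      (∀ u, player u = true → ∃ v, (u, v) ∈ E ∧ s v - w u v ≤ s u)) ↔
    (∃ π : V → V,
      (∀ u, player u = true → (u, π u) ∈ E) ∧
      (∀ (ℓ : ℕ) (c : ZMod (ℓ + 1) → V),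
        (∀ k, (c k, c (k + 1)) ∈ E ∧ (player (c k) = true → c (k + 1) = π (c k))) →
        0 ≤ ∑ k, w (c k) (c (k + 1)))) := by
  constructor
  · rintro ⟨s, h0, h1⟩
    have hex : ∀ u, ∃ v, player u = true → (u, v) ∈ E ∧ s v - w u v ≤ s u := by
      intro u
      by_cases hu : player u = true
      · obtain ⟨v, hv⟩ := h1 u hu
        exact ⟨v, fun _ => hv⟩
      · exact ⟨u, fun h => absurd h hu⟩
    choose π hπ using hex
    refine ⟨π, fun u hu => (hπ u hu).1, fun l c hc => ?_⟩
    have harc : ∀ k, s (c (k + 1)) - s (c k) ≤ w (c k) (c (k + 1)) := by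
      intro k
      obtain ⟨hE, hk⟩ := hc k
      cases hp : player (c k) with
      | false => linarith [h0 _ hp _ hE]
      | true =>
        rw [hk hp]
        linarith [(hπ _ hp).2]
    have hshift : ∑ k, s (c (k + 1)) = ∑ k, s (c k) :=
      Equiv.sum_comp (Equiv.addRight (1 : ZMod (l + 1))) (fun k => s (c k))
    calc (0 : ℝ) = ∑ k, (s (c (k + 1)) - s (c k)) := by
          rw [Finset.sum_sub_distrib, hshift, sub_self]
      _ ≤ _ := Finset.sum_le_sum fun k _ => harc k
  · rintro ⟨π, hπ, hcons⟩
    obtain ⟨s, hs⟩ := exists_potential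
      (R := fun u v => (u, v) ∈ E ∧ (player u = true → v = π u)) (w := w) hcons
    refine ⟨s, fun u hu v huv => hs u v ⟨huv, fun h => ?_⟩, fun u hu => ?_⟩
    · rw [hu] at h
      exact absurd h Bool.false_ne_true
    · exact ⟨π u, hπ u hu, hs u _ ⟨hπ u hu, fun _ => rfl⟩⟩
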